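/- Let (X, ·) be a non-degenerate cycle set, and define a ≈ a' if and only if a·b = a'·b for all b ∈ X (an equivalence relation on X). Then the operation · descends to a well-defined binary operation on the quotient X̄ := X/≈ — that is, a ≈ a' and b ≈ b' imply a·b ≈ a'·b' — and X̄ with this induced operation is again a non-degenerate cycle set: the induced left translations are bijective, the induced operation satisfies the cycle identity, and the induced squaring map is bijective. -/

import Mathlib

/-- The retraction equivalence relation on a cycle set:
`a ≈ a'` iff `a·b = a'·b` for all `b`. -/
def retSetoid {X : Type*} (op : X → X → X) : Setoid X :=
  ⟨fun a a' => ∀ b, op a b = op a' b,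
    ⟨fun _ _ => rfl, fun h b => (h b).symm, fun h1 h2 b => (h1 b).trans (h2 b)⟩⟩

/-!
Write `σ a` for the left translation `op a`, so that `a ≈ b` means `σ a = σ b`. The cycle
identity says `σ (a·b) ∘ σ a = σ (b·a) ∘ σ b`, whose right-hand side depends on `b` only through
`σ b`; hence the operation descends to the quotient. Surjectivity is then inherited, and what has
to be shown is that `σ (a·b) = σ (a·b')` forces `σ b = σ b'` and that `σ (a·a) = σ (b·b)` forces
`σ a = σ b`. In both cases injectivity of the squaring map makes the outer translations in an
equation between two such composites agree, so that they can be cancelled.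
-/

open Function

/-- The cycle identity `(a·b)·(a·c) = (b·a)·(b·c)` for a binary operation. It is kept apart from
bijectivity of the left translations, so that a result can ask for just the injectivity or
surjectivity it needs. -/
def CycleIdentity {X : Type*} (op : X → X → X) : Prop :=
  ∀ a b c, op (op a b) (op a c) = op (op b a) (op b c)

theorem mk_retSetoid_eq_iff {X : Type*} {op : X → X → X} {a b : X} :
    Quotient.mk (retSetoid op) a = Quotient.mk (retSetoid op) b ↔ op a = op b :=
  Quotient.eq.trans funext_iff.symm

namespace CycleIdentity

variable {X : Type*} {op : X → X → X} {a a' b b' : X}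

theorem op_op_comp_op (hcyc : CycleIdentity op) (a b : X) :
    op (op a b) ∘ op a = op (op b a) ∘ op b :=
  funext (hcyc a b)

theorem op_op_congr (hcyc : CycleIdentity op) (hsurj : ∀ a, Surjective (op a))
    (ha : op a = op a') (hb : op b = op b') : op (op a b) = op (op a' b') := by
  suffices op (op a b) = op (op a b') by rw [this, ha]
  apply (hsurj a).injective_comp_right
  calc op (op a b) ∘ op a = op (op b a) ∘ op b := hcyc.op_op_comp_op a b
    _ = op (op b' a) ∘ op b' := by rw [hb]
    _ = op (op a b') ∘ op a := hcyc.op_op_comp_op b' a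

theorem op_eq_of_op_op_eq (hcyc : CycleIdentity op) (hinj : ∀ a, Injective (op a))
    (hsq : Injective fun a => op a a) (h : op (op a b) = op (op a b')) : op b = op b' := by
  have hcomp : op (op b a) ∘ op b = op (op b' a) ∘ op b' := by
    rw [← hcyc.op_op_comp_op a b, ← hcyc.op_op_comp_op a b', h]
  have hba : op b a = op b' a := hsq (congrFun hcomp a)
  rw [hba] at hcomp
  exact (hinj _).comp_left hcomp

theorem op_eq_op_self_of_op_op_self_eq (hcyc : CycleIdentity op)
    (hbij : ∀ a, Bijective (op a)) (hsq : Injective fun a => op a a)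
    (h : op (op a a) = op (op b b)) : op b a = op a a := by
  obtain ⟨u, hbu⟩ := (hbij b).surjective (op a a)
  have hub : op u b = op b b := hsq <|
    calc op (op u b) (op u b) = op (op b u) (op b b) := hcyc u b b
      _ = op (op b b) (op b b) := by rw [hbu, h]
  have huu : op u u = op a a := (hbij (op b b)).injective <|
    calc op (op b b) (op u u) = op (op u b) (op u u) := by rw [hub]
      _ = op (op b u) (op b u) := hcyc u b u
      _ = op (op b b) (op a a) := by rw [hbu, h]
  have hua : u = a := hsq huu
  rwa [hua] at hbu

theorem op_eq_of_op_op_self_eq (hcyc : CycleIdentity op) (hbij : ∀ a, Bijective (op a))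
    (hsq : Injective fun a => op a a) (h : op (op a a) = op (op b b)) : op a = op b := by
  have hab : op a b = op b b := hcyc.op_eq_op_self_of_op_op_self_eq hbij hsq h.symm
  have hba : op b a = op a a := hcyc.op_eq_op_self_of_op_op_self_eq hbij hsq h
  apply (hbij (op b b)).injective.comp_left
  calc op (op b b) ∘ op a = op (op a b) ∘ op a := by rw [hab]
    _ = op (op b a) ∘ op b := hcyc.op_op_comp_op a b
    _ = op (op b b) ∘ op b := by rw [hba, h]

/-- The operation induced on the retraction `X/≈`. -/
def retOp (hcyc : CycleIdentity op) (hsurj : ∀ a, Surjective (op a)) :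
    Quotient (retSetoid op) → Quotient (retSetoid op) → Quotient (retSetoid op) :=
  Quotient.map₂ op fun _ _ ha _ _ hb =>
    congrFun (hcyc.op_op_congr hsurj (funext ha) (funext hb))

theorem retOp_mk (hcyc : CycleIdentity op) (hsurj : ∀ a, Surjective (op a)) (a b : X) :
    hcyc.retOp hsurj (Quotient.mk _ a) (Quotient.mk _ b) = Quotient.mk _ (op a b) :=
  rfl

theorem cycleIdentity_retOp (hcyc : CycleIdentity op) (hsurj : ∀ a, Surjective (op a)) :
    CycleIdentity (hcyc.retOp hsurj) := by
  rintro ⟨a⟩ ⟨b⟩ ⟨c⟩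
  exact congrArg (Quotient.mk _) (hcyc a b c)

theorem bijective_retOp (hcyc : CycleIdentity op) (hbij : ∀ a, Bijective (op a))
    (hsq : Injective fun a => op a a) (q : Quotient (retSetoid op)) :
    Bijective (hcyc.retOp (fun a => (hbij a).surjective) q) := by
  obtain ⟨a⟩ := q
  constructor
  · rintro ⟨b⟩ ⟨b'⟩ h
    exact mk_retSetoid_eq_iff.2 <|
      hcyc.op_eq_of_op_op_eq (fun a => (hbij a).injective) hsq (mk_retSetoid_eq_iff.1 h)
  · rintro ⟨b⟩
    obtain ⟨c, rfl⟩ := (hbij a).surjective b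
    exact ⟨Quotient.mk _ c, hcyc.retOp_mk _ a c⟩

theorem bijective_retOp_self (hcyc : CycleIdentity op) (hbij : ∀ a, Bijective (op a))
    (hsq : Bijective fun a => op a a) :
    Bijective fun q => hcyc.retOp (fun a => (hbij a).surjective) q q := by
  constructor
  · rintro ⟨a⟩ ⟨b⟩ h
    exact mk_retSetoid_eq_iff.2 <|
      hcyc.op_eq_of_op_op_self_eq hbij hsq.injective (mk_retSetoid_eq_iff.1 h)
  · rintro ⟨b⟩
    obtain ⟨c, rfl⟩ := hsq.surjective b
    exact ⟨Quotient.mk _ c, hcyc.retOp_mk _ c c⟩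

end CycleIdentity

/-- For a non-degenerate cycle set `(X, ·)`, the operation
descends to the quotient `X̄ = X/≈`, and the induced structure is again a
non-degenerate cycle set. -/
theorem statement_19 {X : Type*} (op : X → X → X)
    (hbij : ∀ a : X, Function.Bijective (op a))
    (hcyc : ∀ a b c : X, op (op a b) (op a c) = op (op b a) (op b c))
    (hnd : Function.Bijective (fun a : X => op a a)) :
    (∀ a a' b b' : X, (∀ c, op a c = op a' c) → (∀ c, op b c = op b' c) →
      ∀ c, op (op a b) c = op (op a' b') c) ∧
    ∃ opQ : Quotient (retSetoid op) → Quotient (retSetoid op) →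
        Quotient (retSetoid op),
      (∀ a b : X, opQ (Quotient.mk (retSetoid op) a) (Quotient.mk (retSetoid op) b)
          = Quotient.mk (retSetoid op) (op a b)) ∧
      (∀ q, Function.Bijective (opQ q)) ∧
      (∀ q r t, opQ (opQ q r) (opQ q t) = opQ (opQ r q) (opQ r t)) ∧
      Function.Bijective (fun q => opQ q q) := by
  have hcycle : CycleIdentity op := hcyc
  have hsurj : ∀ a, Surjective (op a) := fun a => (hbij a).surjective
  exact ⟨fun _ _ _ _ ha hb => congrFun (hcycle.op_op_congr hsurj (funext ha) (funext hb)),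
    hcycle.retOp hsurj, hcycle.retOp_mk hsurj, hcycle.bijective_retOp hbij hnd.injective,
    hcycle.cycleIdentity_retOp hsurj, hcycle.bijective_retOp_self hbij hnd⟩
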